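/- Let (Y_n) be the Snell envelope of (Z_n) and let M* be the martingale part of its Doob decomposition, i.e., M*_0 = 0 and M*_n = Σ_{k=1}^n (Y_k − E[Y_k | 𝓕_{k−1}]). Then almost surely max_{0≤n≤N} (Z_n − M*_n) ≤ Y_0. -/

import Mathlib

open MeasureTheory Filter Finset

/-!
Since `M*_k - M*_{k-1} = Y_k - E[Y_k | 𝓕_{k-1}] ≥ Y_k - Y_{k-1}`, summing up to `n` gives
`M*_n ≥ Y_n - Y_0 ≥ Z_n - Y_0` pathwise. This uses `E[Y_k | 𝓕_{k-1}]` only through the inequality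
`E[Y_k | 𝓕_{k-1}] ≤ Y_{k-1}`, so any predictor `P_k` with that property may take its place.
-/

theorem sub_sum_Icc_sub_le {G : Type*} [AddCommGroup G] [PartialOrder G] [IsOrderedAddMonoid G]
    {y p : ℕ → G} {n : ℕ} (h : ∀ k < n, p (k + 1) ≤ y k) :
    y n - ∑ k ∈ Icc 1 n, (y k - p k) ≤ y 0 := by
  rw [sub_le_comm]
  calc
    y n - y 0 = ∑ k ∈ range n, (y (k + 1) - y k) := (sum_range_sub y n).symm
    _ ≤ ∑ k ∈ range n, (y (k + 1) - p (k + 1)) :=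
      sum_le_sum fun k hk => sub_le_sub_left (h k (mem_range.mp hk)) _
    _ = ∑ k ∈ Icc 1 n, (y k - p k) := by
      rw [range_eq_Ico, sum_Ico_add' (fun k => y k - p k) 0 n 1, zero_add,
        Ico_add_one_right_eq_Icc]

theorem doob_martingale_pathwise_bound_general
    {Ω : Type*} {m : MeasurableSpace Ω} {μ : Measure Ω}
    (N : ℕ) (Z Y P : ℕ → Ω → ℝ)
    (hYN : Z N ≤ᵐ[μ] Y N)
    (hYrec : ∀ n < N, (fun ω => max (Z n ω) (P (n + 1) ω)) ≤ᵐ[μ] Y n) :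
    ∀ᵐ ω ∂μ,
      (Finset.range (N + 1)).sup'
        (Finset.nonempty_range_iff.mpr (Nat.succ_ne_zero N))
        (fun n => Z n ω - ∑ k ∈ Finset.Icc 1 n, (Y k ω - P k ω)) ≤ Y 0 ω := by
  have hYrec_ae : ∀ᵐ ω ∂μ, ∀ n < N, max (Z n ω) (P (n + 1) ω) ≤ Y n ω := by
    simpa only [ae_all_iff, EventuallyLE] using hYrec
  filter_upwards [hYN, hYrec_ae] with ω hZN hrec
  have hZ : ∀ n ≤ N, Z n ω ≤ Y n ω := fun n hn => by
    rcases hn.lt_or_eq with hlt | rfl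
    · exact (le_max_left _ _).trans (hrec n hlt)
    · exact hZN
  have hP : ∀ n < N, P (n + 1) ω ≤ Y n ω := fun n hn => (le_max_right _ _).trans (hrec n hn)
  refine sup'_le _ _ fun n hn => ?_
  have hnN : n ≤ N := mem_range_succ_iff.mp hn
  calc
    Z n ω - ∑ k ∈ Icc 1 n, (Y k ω - P k ω) ≤ Y n ω - ∑ k ∈ Icc 1 n, (Y k ω - P k ω) :=
      sub_le_sub_right (hZ n hnN) _
    _ ≤ Y 0 ω :=
      sub_sum_Icc_sub_le (y := (Y · ω)) (p := (P · ω)) fun k hk => hP k (hk.trans_le hnN)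

/-- With `M*` the martingale part of the Doob decomposition of the Snell envelope `Y`,
i.e. `M*_0 = 0` and `M*_n = Σ_{k=1}^n (Y_k − E[Y_k | 𝓕_{k−1}])`, almost surely
`max_{0≤n≤N} (Z_n − M*_n) ≤ Y_0`. -/
theorem doob_martingale_pathwise_bound
    {Ω : Type*} {m : MeasurableSpace Ω} {μ : Measure Ω} [IsProbabilityMeasure μ]
    (N : ℕ) (ℱ : Filtration ℕ m)
    (Z Y : ℕ → Ω → ℝ)
    (hZadapted : Adapted ℱ Z)
    (hYadapted : Adapted ℱ Y)
    (hZsq : Integrable (fun ω =>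
      (Finset.range (N + 1)).sup'
        (Finset.nonempty_range_iff.mpr (Nat.succ_ne_zero N))
        (fun k => (Z k ω) ^ 2)) μ)
    (hYN : Y N = Z N)
    (hYrec : ∀ n < N, Y n =ᵐ[μ] fun ω => max (Z n ω) ((μ[Y (n + 1)|ℱ n]) ω))
    (MStar : ℕ → Ω → ℝ)
    (hMStar : ∀ n ω, MStar n ω =
      ∑ k ∈ Finset.Icc 1 n, (Y k ω - (μ[Y k|ℱ (k - 1)]) ω)) :
    ∀ᵐ ω ∂μ,
      (Finset.range (N + 1)).sup'
        (Finset.nonempty_range_iff.mpr (Nat.succ_ne_zero N))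
        (fun n => Z n ω - MStar n ω) ≤ Y 0 ω := by
  simp only [hMStar]
  exact doob_martingale_pathwise_bound_general N Z Y (fun k => μ[Y k|ℱ (k - 1)])
    (EventuallyEq.of_eq hYN.symm).le fun n hn => (hYrec n hn).symm.le
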